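/- Assume the kinetic setting below, with H C², b a bounded C¹ solution of b_t + H_x b_ρ − H_ρ b_x = H_{ρρ}b² + 2H_{ρx}b + H_{xx}, and f a C¹ solution of the kinetic equation f_t − (vf)_x − C⁺f − C⁻f = Q⁺(f) − Q⁻(f). Let φ be the flow of dρ/dz = b(z,t,ρ) and Γ(x,y,t,ρ) := ∫_x^y λ(z,t,φ_x^z(ρ;t))dz. Then Γ_t(x,y,t,ρ) + β(x,t,ρ)Γ_ρ(x,y,t,ρ) = A(y,t,φ_x^y(ρ;t)) − A(x,t,ρ) for all x ≤ y, t, ρ. -/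

import Mathlib

open MeasureTheory Set


/-- The Rankine–Hugoniot velocity `v(x,t,ρ₋,ρ₊) = (H(x,t,ρ₋)−H(x,t,ρ₊))/(ρ₋−ρ₊)`,
extended by `H_ρ` on the diagonal. -/
noncomputable def vel (H : ℝ → ℝ → ℝ → ℝ) (x t a c : ℝ) : ℝ :=
  if a = c then deriv (fun r => H x t r) a else (H x t a - H x t c) / (a - c)

/-- The zeroth moment `λ(x,t,ρ) = ∫_ρ^∞ f(x,t,ρ,ρ₊) dρ₊`. -/
noncomputable def lamF (f : ℝ → ℝ → ℝ → ℝ → ℝ) (x t ρ : ℝ) : ℝ :=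
  ∫ rp in Ioi ρ, f x t ρ rp

/-- The flux moment `A(x,t,ρ) = ∫_ρ^∞ v(x,t,ρ,ρ₊) f(x,t,ρ,ρ₊) dρ₊`. -/
noncomputable def AF (H : ℝ → ℝ → ℝ → ℝ) (f : ℝ → ℝ → ℝ → ℝ → ℝ) (x t ρ : ℝ) : ℝ :=
  ∫ rp in Ioi ρ, vel H x t ρ rp * f x t ρ rp

/-- `β = H_x + b·H_ρ`. -/
noncomputable def betaF (H b : ℝ → ℝ → ℝ → ℝ) (x t ρ : ℝ) : ℝ :=
  deriv (fun a => H a t ρ) x + b x t ρ * deriv (fun r => H x t r) ρ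

/-- `K(x,t,ρ₊,ρ₋) = b(x,t,ρ₊)v(x,t,ρ₋,ρ₊) − β(x,t,ρ₊)`. -/
noncomputable def KF (H b : ℝ → ℝ → ℝ → ℝ) (x t rp rm : ℝ) : ℝ :=
  b x t rp * vel H x t rm rp - betaF H b x t rp

/-- The coagulation gain term `Q⁺(f)`. -/
noncomputable def QplusF (H : ℝ → ℝ → ℝ → ℝ) (f : ℝ → ℝ → ℝ → ℝ → ℝ)
    (x t rm rp : ℝ) : ℝ :=
  ∫ rs in Ioo rm rp, (vel H x t rs rp - vel H x t rm rs) * f x t rm rs * f x t rs rp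

/-- The loss kernel `Jf`. -/
noncomputable def JF (H : ℝ → ℝ → ℝ → ℝ) (f : ℝ → ℝ → ℝ → ℝ → ℝ)
    (x t rm rp : ℝ) : ℝ :=
  AF H f x t rp - AF H f x t rm - vel H x t rm rp * (lamF f x t rp - lamF f x t rm)

/-- The boundary-drift operator `C⁺f = ∂_{ρ₊}[K(x,t,ρ₊,ρ₋) f(x,t,ρ₋,ρ₊)]`. -/
noncomputable def CplusF (H b : ℝ → ℝ → ℝ → ℝ) (f : ℝ → ℝ → ℝ → ℝ → ℝ)
    (x t rm rp : ℝ) : ℝ :=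
  deriv (fun r => KF H b x t r rm * f x t rm r) rp

/-- The boundary-drift operator `C⁻f = b ∂_{ρ₋}(vf) − β ∂_{ρ₋}f`. -/
noncomputable def CminusF (H b : ℝ → ℝ → ℝ → ℝ) (f : ℝ → ℝ → ℝ → ℝ → ℝ)
    (x t rm rp : ℝ) : ℝ :=
  b x t rm * deriv (fun r => vel H x t r rp * f x t r rp) rm
    - betaF H b x t rm * deriv (fun r => f x t r rp) rm

/-- `f` solves the kinetic equation `f_t − (vf)_x − C⁺f − C⁻f = Q⁺(f) − f·Jf`. -/
def SolvesKineticF (H b : ℝ → ℝ → ℝ → ℝ) (f : ℝ → ℝ → ℝ → ℝ → ℝ) : Prop :=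
  ∀ x t rm rp : ℝ,
    deriv (fun s => f x s rm rp) t - deriv (fun z => vel H z t rm rp * f z t rm rp) x
        - CplusF H b f x t rm rp - CminusF H b f x t rm rp
      = QplusF H f x t rm rp - f x t rm rp * JF H f x t rm rp

/-- `Γ(x,y,t,ρ) = ∫_x^y λ(z,t,φ_x^z(ρ;t)) dz`. -/
noncomputable def GammaK (f : ℝ → ℝ → ℝ → ℝ → ℝ) (φ : ℝ → ℝ → ℝ → ℝ → ℝ)
    (x y t ρ : ℝ) : ℝ :=
  ∫ z in x..y, lamF f z t (φ x z ρ t)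


theorem paramInt {E : Type*} [NormedAddCommGroup E] [NormedSpace ℝ E] [ProperSpace E]
    (F : E × ℝ → ℝ) (hF : ContDiff ℝ 1 F) (a b : ℝ) (p0 : E) :
    HasFDerivAt (fun p => ∫ z in a..b, F (p, z))
      (∫ z in a..b, (fderiv ℝ F (p0, z)).comp (ContinuousLinearMap.inl ℝ E ℝ)) p0 := by
  have hc : Continuous (fun q : E × ℝ => (fderiv ℝ F q).comp (ContinuousLinearMap.inl ℝ E ℝ)) :=
    (hF.continuous_fderiv one_ne_zero).clm_comp continuous_const
  have hK : IsCompact (Metric.closedBall p0 1 ×ˢ uIcc a b) :=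
    (isCompact_closedBall p0 1).prod isCompact_uIcc
  obtain ⟨C, hC⟩ := hK.exists_bound_of_continuousOn hc.continuousOn
  refine (intervalIntegral.hasFDerivAt_integral_of_dominated_of_fderiv_le
    (F := fun p z => F (p, z))
    (F' := fun p z => (fderiv ℝ F (p, z)).comp (ContinuousLinearMap.inl ℝ E ℝ))
    (bound := fun _ => C) (Metric.closedBall_mem_nhds p0 one_pos) ?_ ?_ ?_ ?_ ?_ ?_)
  · refine Filter.Eventually.of_forall fun p => ?_
    exact (hF.continuous.comp (by fun_prop : Continuous fun z : ℝ => (p, z))).aestronglyMeasurable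
  · exact (hF.continuous.comp
      (by fun_prop : Continuous fun z : ℝ => (p0, z))).intervalIntegrable _ _
  · exact (hc.comp (by fun_prop : Continuous fun z : ℝ => (p0, z))).aestronglyMeasurable
  · refine Filter.Eventually.of_forall fun z hz p hp => hC (p, z) ⟨hp, uIoc_subset_uIcc hz⟩
  · exact intervalIntegrable_const
  · refine Filter.Eventually.of_forall fun z _ p _ => ?_
    have h1 : HasFDerivAt F (fderiv ℝ F (p, z)) (p, z) :=
      (hF.differentiable one_ne_zero _).hasFDerivAt
    exact h1.comp p (hasFDerivAt_prodMk_left p z)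

theorem paramInt_contDiff {E : Type*} [NormedAddCommGroup E] [NormedSpace ℝ E] [ProperSpace E]
    (F : E × ℝ → ℝ) (hF : ContDiff ℝ 1 F) (a b : ℝ) :
    ContDiff ℝ 1 (fun p => ∫ z in a..b, F (p, z)) := by
  rw [contDiff_one_iff_fderiv]
  refine ⟨fun p => (paramInt F hF a b p).differentiableAt, ?_⟩
  have hc : Continuous (fun q : E × ℝ => (fderiv ℝ F q).comp (ContinuousLinearMap.inl ℝ E ℝ)) :=
    (hF.continuous_fderiv one_ne_zero).clm_comp continuous_const
  have : fderiv ℝ (fun p => ∫ z in a..b, F (p, z)) =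
      fun p => ∫ z in a..b, (fderiv ℝ F (p, z)).comp (ContinuousLinearMap.inl ℝ E ℝ) :=
    funext fun p => (paramInt F hF a b p).fderiv
  rw [this]
  exact intervalIntegral.continuous_parametric_intervalIntegral_of_continuous'
    (f := fun p z => (fderiv ℝ F (p, z)).comp (ContinuousLinearMap.inl ℝ E ℝ)) hc a b

theorem deriv_param_cont (G : ℝ → ℝ → ℝ) (hG : ContDiff ℝ 1 (fun q : ℝ × ℝ => G q.1 q.2)) :
    Continuous (fun q : ℝ × ℝ => deriv (fun s => G s q.2) q.1) := by
  have h : ∀ q : ℝ × ℝ, deriv (fun s => G s q.2) q.1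
      = fderiv ℝ (fun q : ℝ × ℝ => G q.1 q.2) q (1, 0) := by
    intro q
    have h1 : HasFDerivAt (fun q : ℝ × ℝ => G q.1 q.2) _ q :=
      (hG.differentiable one_ne_zero q).hasFDerivAt
    have h2 : HasDerivAt (fun s : ℝ => (s, q.2)) ((1 : ℝ), (0 : ℝ)) q.1 :=
      (hasDerivAt_id _).prodMk (hasDerivAt_const _ _)
    exact (h1.comp_hasDerivAt q.1 h2).deriv
  simp_rw [h]
  exact (hG.continuous_fderiv one_ne_zero).clm_apply continuous_const

theorem param1 (G : ℝ → ℝ → ℝ) (hG : ContDiff ℝ 1 (fun q : ℝ × ℝ => G q.1 q.2)) (a b s0 : ℝ) :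
    HasDerivAt (fun s => ∫ z in a..b, G s z) (∫ z in a..b, deriv (fun s => G s z) s0) s0 := by
  have h := (paramInt (fun q : ℝ × ℝ => G q.1 q.2) hG a b s0).hasDerivAt
  convert h using 1
  have hc : Continuous (fun z : ℝ => (fderiv ℝ (fun q : ℝ × ℝ => G q.1 q.2) (s0, z)).comp
      (ContinuousLinearMap.inl ℝ ℝ ℝ)) :=
    ((hG.continuous_fderiv one_ne_zero).comp
      (by fun_prop : Continuous fun z : ℝ => (s0, z))).clm_comp continuous_const
  rw [ContinuousLinearMap.intervalIntegral_apply (hc.intervalIntegrable _ _)]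
  refine intervalIntegral.integral_congr fun z _ => ?_
  have h1 : HasFDerivAt (fun q : ℝ × ℝ => G q.1 q.2) _ (s0, z) :=
    (hG.differentiable one_ne_zero (s0, z)).hasFDerivAt
  have h2 : HasDerivAt (fun s : ℝ => (s, z)) ((1 : ℝ), (0 : ℝ)) s0 :=
    (hasDerivAt_id _).prodMk (hasDerivAt_const _ _)
  have h3 := (HasFDerivAt.comp_hasDerivAt (l := fun q : ℝ × ℝ => G q.1 q.2)
    (f := fun s => (s, z)) s0 h1 h2).deriv
  simpa [Function.comp_def] using h3

theorem chain3 (B : ℝ → ℝ → ℝ → ℝ)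
    (hB : ContDiff ℝ 1 (fun p : ℝ × ℝ × ℝ => B p.1 p.2.1 p.2.2))
    {u v w : ℝ → ℝ} {u' v' w' e : ℝ} (hu : HasDerivAt u u' e) (hv : HasDerivAt v v' e)
    (hw : HasDerivAt w w' e) :
    HasDerivAt (fun s => B (u s) (v s) (w s))
      (deriv (fun a => B a (v e) (w e)) (u e) * u' + deriv (fun a => B (u e) a (w e)) (v e) * v'
        + deriv (fun a => B (u e) (v e) a) (w e) * w') e := by
  have h1 : HasFDerivAt (fun p : ℝ × ℝ × ℝ => B p.1 p.2.1 p.2.2)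
      (fderiv ℝ (fun p : ℝ × ℝ × ℝ => B p.1 p.2.1 p.2.2) (u e, v e, w e)) (u e, v e, w e) :=
    (hB.differentiable one_ne_zero _).hasFDerivAt
  set L := fderiv ℝ (fun p : ℝ × ℝ × ℝ => B p.1 p.2.1 p.2.2) (u e, v e, w e)
  have key : ∀ {u v w : ℝ → ℝ} {u' v' w' e' : ℝ} (_ : HasDerivAt u u' e') (_ : HasDerivAt v v' e')
    (_ : HasDerivAt w w' e'), HasFDerivAt (fun p : ℝ × ℝ × ℝ => B p.1 p.2.1 p.2.2) L
      (u e', v e', w e') →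
    HasDerivAt (fun s => B (u s) (v s) (w s)) (L (u', v', w')) e' := by
    intro u v w u' v' w' e' hu hv hw h
    exact HasFDerivAt.comp_hasDerivAt (l := fun p : ℝ × ℝ × ℝ => B p.1 p.2.1 p.2.2)
      (f := fun s => (u s, v s, w s)) e' h (hu.prodMk (hv.prodMk hw))
  have ha := (key (hasDerivAt_id (u e)) (hasDerivAt_const (u e) (v e))
    (hasDerivAt_const (u e) (w e)) h1).deriv
  have hb := (key (hasDerivAt_const (v e) (u e)) (hasDerivAt_id (v e))
    (hasDerivAt_const (v e) (w e)) h1).deriv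
  have hc := (key (hasDerivAt_const (w e) (u e)) (hasDerivAt_const (w e) (v e))
    (hasDerivAt_id (w e)) h1).deriv
  simp only [id] at ha hb hc
  rw [ha, hb, hc]
  convert key hu hv hw h1 using 1
  have : (u', v', w') = u' • ((1:ℝ), (0:ℝ), (0:ℝ)) + v' • ((0:ℝ), (1:ℝ), (0:ℝ))
      + w' • ((0:ℝ), (0:ℝ), (1:ℝ)) := by simp
  rw [this, map_add, map_add, map_smul, map_smul, map_smul]
  simp only [smul_eq_mul]; ring

theorem lin_unique (g c : ℝ → ℝ) (hc : Continuous c) (x : ℝ) (h0 : g x = 0)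
    (hg : ∀ z, HasDerivAt g (c z * g z) z) : ∀ z, g z = 0 := by
  intro z
  have hI : ∀ z, HasDerivAt (fun z => ∫ w in x..z, c w) (c z) z := fun z =>
    intervalIntegral.integral_hasDerivAt_right (hc.intervalIntegrable _ _)
      (hc.stronglyMeasurableAtFilter _ _) hc.continuousAt
  have hd : ∀ z, HasDerivAt (fun z => g z * Real.exp (-∫ w in x..z, c w)) 0 z := by
    intro z
    exact ((hg z).mul ((hI z).neg.exp)).congr_deriv (by ring)
  have := is_const_of_deriv_eq_zero (fun z => (hd z).differentiableAt) (fun z => (hd z).deriv) z x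
  simp only [h0, zero_mul] at this
  exact (mul_eq_zero.1 this).resolve_right (Real.exp_ne_zero _)

theorem H_x_C1 (H : ℝ → ℝ → ℝ → ℝ)
    (hH : ContDiff ℝ 2 (fun p : ℝ × ℝ × ℝ => H p.1 p.2.1 p.2.2)) :
    ContDiff ℝ 1 (fun p : ℝ × ℝ × ℝ => deriv (fun a => H a p.2.1 p.2.2) p.1) ∧
    ContDiff ℝ 1 (fun p : ℝ × ℝ × ℝ => deriv (fun a => H p.1 p.2.1 a) p.2.2) ∧
    ∀ x t r, deriv (fun r => deriv (fun a => H a t r) x) r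
      = deriv (fun a => deriv (fun r => H a t r) r) x := by
  set Hh := (fun p : ℝ × ℝ × ℝ => H p.1 p.2.1 p.2.2) with hHh
  have h1 : ∀ p, HasFDerivAt Hh (fderiv ℝ Hh p) p := fun p =>
    (hH.differentiable two_ne_zero p).hasFDerivAt
  have hd : ContDiff ℝ 1 (fderiv ℝ Hh) := hH.fderiv_right (by norm_num)
  have ex : ∀ x t r, deriv (fun a => H a t r) x = fderiv ℝ Hh (x, t, r) (1, 0, 0) := by
    intro x t r
    exact (HasFDerivAt.comp_hasDerivAt (l := Hh) (f := fun s => (s, t, r)) x (h1 _)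
      ((hasDerivAt_id _).prodMk ((hasDerivAt_const _ _).prodMk (hasDerivAt_const _ _)))).deriv
  have er : ∀ x t r, deriv (fun a => H x t a) r = fderiv ℝ Hh (x, t, r) (0, 0, 1) := by
    intro x t r
    exact (HasFDerivAt.comp_hasDerivAt (l := Hh) (f := fun s => (x, t, s)) r (h1 _)
      ((hasDerivAt_const _ _).prodMk ((hasDerivAt_const _ _).prodMk (hasDerivAt_id _)))).deriv
  refine ⟨?_, ?_, ?_⟩
  · simp_rw [ex]; exact hd.clm_apply contDiff_const
  · simp_rw [er]; exact hd.clm_apply contDiff_const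
  · intro x t r
    simp_rw [ex, er]
    have h2 : HasFDerivAt (fderiv ℝ Hh) (fderiv ℝ (fderiv ℝ Hh) (x, t, r)) (x, t, r) :=
      (hd.differentiable one_ne_zero _).hasFDerivAt
    have a1 := ((HasFDerivAt.comp_hasDerivAt (l := fderiv ℝ Hh) (f := fun s => (x, t, s)) r h2
      ((hasDerivAt_const _ _).prodMk ((hasDerivAt_const _ _).prodMk (hasDerivAt_id _)))).clm_apply
        (hasDerivAt_const r ((1:ℝ), (0:ℝ), (0:ℝ)))).deriv
    have a2 := ((HasFDerivAt.comp_hasDerivAt (l := fderiv ℝ Hh) (f := fun s => (s, t, r)) x h2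
      ((hasDerivAt_id _).prodMk ((hasDerivAt_const _ _).prodMk (hasDerivAt_const _ _)))).clm_apply
        (hasDerivAt_const x ((0:ℝ), (0:ℝ), (1:ℝ)))).deriv
    simp only [Function.comp_def, map_zero, add_zero] at a1 a2
    rw [a1, a2]
    exact (hH.contDiffAt.isSymmSndFDerivAt (by simp)) _ _

theorem swap_cont (G : ℝ → ℝ → ℝ) (hG : Continuous (fun q : ℝ × ℝ => G q.1 q.2)) (a b c d : ℝ) :
    ∫ x in a..b, ∫ y in c..d, G x y = ∫ y in c..d, ∫ x in a..b, G x y := by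
  apply intervalIntegral_intervalIntegral_swap
  have : IntegrableOn G.uncurry (uIcc a b ×ˢ uIcc c d) :=
    ContinuousOn.integrableOn_compact (isCompact_uIcc.prod isCompact_uIcc)
      (show ContinuousOn (Function.uncurry G) _ from hG.continuousOn)
  exact this.mono_set (prod_mono uIoc_subset_uIcc uIoc_subset_uIcc)

theorem int_conv (g : ℝ → ℝ) (S : Set ℝ) (Pm Pp : ℝ)
    (h : ∀ r, g r ≠ 0 → r ∈ S ∧ Pm < r ∧ r < Pp) :
    ∫ r in S, g r = ∫ r in Pm..Pp, g r := by
  rw [setIntegral_eq_integral_of_forall_compl_eq_zero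
    (fun r hr => by by_contra h0; exact hr (h r h0).1)]
  rcases le_total Pm Pp with hle | hle
  · rw [intervalIntegral.integral_of_le hle]
    rw [setIntegral_eq_integral_of_forall_compl_eq_zero
      (fun r hr => by by_contra h0; exact hr ⟨(h r h0).2.1, (h r h0).2.2.le⟩)]
  · have : g = fun _ => 0 := by
      funext r
      by_contra h0
      have := h r h0
      linarith [this.2.1, this.2.2]
    simp [this]

theorem vel_eq (H : ℝ → ℝ → ℝ → ℝ)
    (hH : ContDiff ℝ 2 (fun p : ℝ × ℝ × ℝ => H p.1 p.2.1 p.2.2)) (x t a c : ℝ) :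
    vel H x t a c = ∫ s in (0:ℝ)..1, deriv (fun r => H x t r) (a + s * (c - a)) := by
  unfold vel
  split_ifs with hac
  · subst hac; simp
  · have h1 : ContDiff ℝ 2 (fun r => H x t r) :=
      hH.comp (by fun_prop : ContDiff ℝ 2 (fun r : ℝ => (x, t, r)))
    have hd : ∀ s ∈ uIcc (0:ℝ) 1, HasDerivAt (fun s => H x t (a + s * (c - a)))
        (deriv (fun r => H x t r) (a + s * (c - a)) * (c - a)) s := by
      intro s _
      have h2 : HasDerivAt (fun r => H x t r) _ (a + s * (c - a)) :=
        (h1.differentiable two_ne_zero _).hasDerivAt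
      have h3 : HasDerivAt (fun s : ℝ => a + s * (c - a)) (c - a) s := by
        simpa using ((hasDerivAt_id s).mul_const (c - a)).const_add a
      exact h2.comp s h3
    have hcont : Continuous (fun s => deriv (fun r => H x t r) (a + s * (c - a))) :=
      (h1.continuous_deriv (by norm_num)).comp (by fun_prop)
    have := intervalIntegral.integral_eq_sub_of_hasDerivAt hd
      ((hcont.mul continuous_const).intervalIntegrable _ _)
    rw [intervalIntegral.integral_mul_const] at this
    have hne : c - a ≠ 0 := sub_ne_zero.2 (Ne.symm hac)
    have hne' : a - c ≠ 0 := sub_ne_zero.2 hac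
    rw [div_eq_iff hne']
    simp only [one_mul, zero_mul, add_zero, add_sub_cancel] at this
    linarith

theorem vel_C1 (H : ℝ → ℝ → ℝ → ℝ)
    (hH : ContDiff ℝ 2 (fun p : ℝ × ℝ × ℝ => H p.1 p.2.1 p.2.2)) :
    ContDiff ℝ 1 (fun p : ℝ × ℝ × ℝ × ℝ => vel H p.1 p.2.1 p.2.2.1 p.2.2.2) := by
  simp_rw [vel_eq H hH]
  exact paramInt_contDiff (E := ℝ × ℝ × ℝ × ℝ)
    (fun q => deriv (fun r => H q.1.1 q.1.2.1 r) (q.1.2.2.1 + q.2 * (q.1.2.2.2 - q.1.2.2.1)))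
    ((H_x_C1 H hH).2.1.comp (by fun_prop : ContDiff ℝ 1 fun q : (ℝ × ℝ × ℝ × ℝ) × ℝ =>
      (q.1.1, q.1.2.1, q.1.2.2.1 + q.2 * (q.1.2.2.2 - q.1.2.2.1)))) 0 1

theorem supp_strict (f : ℝ → ℝ → ℝ → ℝ → ℝ) (Pm Pp : ℝ)
    (hf_C1 : ContDiff ℝ 1 (fun p : ℝ × ℝ × ℝ × ℝ => f p.1 p.2.1 p.2.2.1 p.2.2.2))
    (hf_supp : ∀ x t rm rp, ¬ (Pm ≤ rm ∧ rm ≤ rp ∧ rp ≤ Pp) → f x t rm rp = 0)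
    (x t rm rp : ℝ) (h : f x t rm rp ≠ 0) : Pm ≤ rm ∧ rm < rp ∧ rp < Pp := by
  have hc : Continuous (fun r => f x t rm r) :=
    hf_C1.continuous.comp (by fun_prop : Continuous fun r : ℝ => (x, t, rm, r))
  have ho : IsOpen {r | f x t rm r ≠ 0} := isOpen_ne_fun hc continuous_const
  have hsub : {r | f x t rm r ≠ 0} ⊆ Icc rm Pp := by
    intro r hr
    by_contra h1
    exact hr (hf_supp x t rm r (fun h2 => h1 ⟨h2.2.1, h2.2.2⟩))
  have := interior_maximal hsub ho h
  rw [interior_Icc] at this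
  refine ⟨?_, this.1, this.2⟩
  by_contra h1
  exact h (hf_supp x t rm rp (fun h2 => h1 h2.1))

theorem betaF_C1 (H b : ℝ → ℝ → ℝ → ℝ)
    (hH : ContDiff ℝ 2 (fun p : ℝ × ℝ × ℝ => H p.1 p.2.1 p.2.2))
    (hb : ContDiff ℝ 1 (fun p : ℝ × ℝ × ℝ => b p.1 p.2.1 p.2.2)) :
    ContDiff ℝ 1 (fun p : ℝ × ℝ × ℝ => betaF H b p.1 p.2.1 p.2.2) :=
  (H_x_C1 H hH).1.add (hb.mul (H_x_C1 H hH).2.1)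

theorem lamF_eq (f : ℝ → ℝ → ℝ → ℝ → ℝ) (Pm Pp : ℝ)
    (hs : ∀ x t rm rp, f x t rm rp ≠ 0 → Pm ≤ rm ∧ rm < rp ∧ rp < Pp) (x t ρ : ℝ) :
    lamF f x t ρ = ∫ r in Pm..Pp, f x t ρ r := by
  apply int_conv
  intro r hr
  have := hs _ _ _ _ hr
  exact ⟨this.2.1, by linarith, this.2.2⟩

theorem AF_eq (H : ℝ → ℝ → ℝ → ℝ) (f : ℝ → ℝ → ℝ → ℝ → ℝ) (Pm Pp : ℝ)
    (hs : ∀ x t rm rp, f x t rm rp ≠ 0 → Pm ≤ rm ∧ rm < rp ∧ rp < Pp) (x t ρ : ℝ) :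
    AF H f x t ρ = ∫ r in Pm..Pp, vel H x t ρ r * f x t ρ r := by
  apply int_conv
  intro r hr
  have := hs _ _ _ _ (right_ne_zero_of_mul hr)
  exact ⟨this.2.1, by linarith, this.2.2⟩

theorem Q_eq (H : ℝ → ℝ → ℝ → ℝ) (f : ℝ → ℝ → ℝ → ℝ → ℝ) (Pm Pp : ℝ)
    (hs : ∀ x t rm rp, f x t rm rp ≠ 0 → Pm ≤ rm ∧ rm < rp ∧ rp < Pp) (x t ρ r : ℝ) :
    QplusF H f x t ρ r
      = ∫ s in Pm..Pp, (vel H x t s r - vel H x t ρ s) * f x t ρ s * f x t s r := by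
  apply int_conv
  intro s hr
  have h1 := hs _ _ _ _ (right_ne_zero_of_mul hr)
  have h2 := hs _ _ _ _ (right_ne_zero_of_mul (left_ne_zero_of_mul hr))
  exact ⟨⟨h2.2.1, h1.2.1⟩, by linarith, h2.2.2⟩

theorem lamF_C1 (f : ℝ → ℝ → ℝ → ℝ → ℝ) (Pm Pp : ℝ)
    (hf : ContDiff ℝ 1 (fun p : ℝ × ℝ × ℝ × ℝ => f p.1 p.2.1 p.2.2.1 p.2.2.2))
    (hs : ∀ x t rm rp, f x t rm rp ≠ 0 → Pm ≤ rm ∧ rm < rp ∧ rp < Pp) :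
    ContDiff ℝ 1 (fun p : ℝ × ℝ × ℝ => lamF f p.1 p.2.1 p.2.2) := by
  simp_rw [lamF_eq f Pm Pp hs]
  exact paramInt_contDiff (E := ℝ × ℝ × ℝ) (fun q => f q.1.1 q.1.2.1 q.1.2.2 q.2)
    (hf.comp (by fun_prop : ContDiff ℝ 1 fun q : (ℝ × ℝ × ℝ) × ℝ =>
      (q.1.1, q.1.2.1, q.1.2.2, q.2))) Pm Pp

theorem AF_C1 (H : ℝ → ℝ → ℝ → ℝ) (f : ℝ → ℝ → ℝ → ℝ → ℝ) (Pm Pp : ℝ)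
    (hV : ContDiff ℝ 1 (fun p : ℝ × ℝ × ℝ × ℝ => vel H p.1 p.2.1 p.2.2.1 p.2.2.2))
    (hf : ContDiff ℝ 1 (fun p : ℝ × ℝ × ℝ × ℝ => f p.1 p.2.1 p.2.2.1 p.2.2.2))
    (hs : ∀ x t rm rp, f x t rm rp ≠ 0 → Pm ≤ rm ∧ rm < rp ∧ rp < Pp) :
    ContDiff ℝ 1 (fun p : ℝ × ℝ × ℝ => AF H f p.1 p.2.1 p.2.2) := by
  simp_rw [AF_eq H f Pm Pp hs]
  exact paramInt_contDiff (E := ℝ × ℝ × ℝ)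
    (fun q => vel H q.1.1 q.1.2.1 q.1.2.2 q.2 * f q.1.1 q.1.2.1 q.1.2.2 q.2)
    ((hV.mul hf).comp (by fun_prop : ContDiff ℝ 1 fun q : (ℝ × ℝ × ℝ) × ℝ =>
      (q.1.1, q.1.2.1, q.1.2.2, q.2))) Pm Pp

/-- Gain and loss terms balance after integration in `ρ₊`. -/
theorem QJ_balance (H : ℝ → ℝ → ℝ → ℝ) (f : ℝ → ℝ → ℝ → ℝ → ℝ) (Pm Pp : ℝ)
    (hV : ContDiff ℝ 1 (fun p : ℝ × ℝ × ℝ × ℝ => vel H p.1 p.2.1 p.2.2.1 p.2.2.2))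
    (hf : ContDiff ℝ 1 (fun p : ℝ × ℝ × ℝ × ℝ => f p.1 p.2.1 p.2.2.1 p.2.2.2))
    (hs : ∀ x t rm rp, f x t rm rp ≠ 0 → Pm ≤ rm ∧ rm < rp ∧ rp < Pp) (x t ρ : ℝ) :
    ∫ r in Pm..Pp, (QplusF H f x t ρ r - f x t ρ r * JF H f x t ρ r) = 0 := by
  have hVc := hV.continuous
  have hfc := hf.continuous
  have v1 : Continuous fun q : ℝ × ℝ => vel H x t q.1 q.2 :=
    hVc.comp (by fun_prop : Continuous fun q : ℝ × ℝ => (x, t, q.1, q.2))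
  have f1 : Continuous fun q : ℝ × ℝ => f x t q.1 q.2 :=
    hfc.comp (by fun_prop : Continuous fun q : ℝ × ℝ => (x, t, q.1, q.2))
  have v2 : Continuous fun r : ℝ => vel H x t ρ r :=
    v1.comp (by fun_prop : Continuous fun r : ℝ => (ρ, r))
  have f2 : Continuous fun r : ℝ => f x t ρ r :=
    f1.comp (by fun_prop : Continuous fun r : ℝ => (ρ, r))
  have l1 : Continuous fun r : ℝ => lamF f x t r :=
    (lamF_C1 f Pm Pp hf hs).continuous.comp (by fun_prop : Continuous fun r : ℝ => (x, t, r))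
  have a1 : Continuous fun r : ℝ => AF H f x t r :=
    (AF_C1 H f Pm Pp hV hf hs).continuous.comp (by fun_prop : Continuous fun r : ℝ => (x, t, r))
  have q1 : Continuous fun q : ℝ × ℝ =>
      (vel H x t q.2 q.1 - vel H x t ρ q.2) * f x t ρ q.2 * f x t q.2 q.1 :=
    (((v1.comp continuous_swap).sub (v2.comp continuous_snd)).mul (f2.comp continuous_snd)).mul
      (f1.comp continuous_swap)
  have q2 : Continuous fun r => QplusF H f x t ρ r := by
    simp_rw [Q_eq H f Pm Pp hs]
    exact intervalIntegral.continuous_parametric_intervalIntegral_of_continuous'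
      (f := fun r s => (vel H x t s r - vel H x t ρ s) * f x t ρ s * f x t s r) q1 _ _
  have j1 : Continuous fun r => f x t ρ r * JF H f x t ρ r := by
    unfold JF; fun_prop
  rw [intervalIntegral.integral_sub (q2.intervalIntegrable _ _) (j1.intervalIntegrable _ _)]
  simp_rw [Q_eq H f Pm Pp hs]
  rw [swap_cont _ q1]
  have e1 : ∀ s, ∫ r in Pm..Pp, (vel H x t s r - vel H x t ρ s) * f x t ρ s * f x t s r
      = f x t ρ s * AF H f x t s - vel H x t ρ s * f x t ρ s * lamF f x t s := by
    intro s
    have v3 : Continuous fun r : ℝ => vel H x t s r :=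
      v1.comp (by fun_prop : Continuous fun r : ℝ => (s, r))
    have f3 : Continuous fun r : ℝ => f x t s r :=
      f1.comp (by fun_prop : Continuous fun r : ℝ => (s, r))
    rw [AF_eq H f Pm Pp hs, lamF_eq f Pm Pp hs, ← intervalIntegral.integral_const_mul,
      ← intervalIntegral.integral_const_mul, ← intervalIntegral.integral_sub]
    · refine intervalIntegral.integral_congr fun r _ => ?_
      ring
    · exact Continuous.intervalIntegrable (by fun_prop) _ _
    · exact Continuous.intervalIntegrable (by fun_prop) _ _
  simp_rw [e1]
  have e2 : ∀ r, f x t ρ r * JF H f x t ρ r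
      = (f x t ρ r * AF H f x t r - vel H x t ρ r * f x t ρ r * lamF f x t r)
        - (AF H f x t ρ * f x t ρ r - lamF f x t ρ * (vel H x t ρ r * f x t ρ r)) := by
    intro r; unfold JF; ring
  have e3 : ∫ r in Pm..Pp, (AF H f x t ρ * f x t ρ r
      - lamF f x t ρ * (vel H x t ρ r * f x t ρ r)) = 0 := by
    rw [intervalIntegral.integral_sub, intervalIntegral.integral_const_mul,
      intervalIntegral.integral_const_mul, ← lamF_eq f Pm Pp hs, ← AF_eq H f Pm Pp hs]
    · ring
    all_goals exact Continuous.intervalIntegrable (by fun_prop) _ _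
  have e4 : ∫ r in Pm..Pp, f x t ρ r * JF H f x t ρ r
      = ∫ r in Pm..Pp, (f x t ρ r * AF H f x t r
        - vel H x t ρ r * f x t ρ r * lamF f x t r) := by
    rw [← sub_zero (∫ r in Pm..Pp, (f x t ρ r * AF H f x t r
        - vel H x t ρ r * f x t ρ r * lamF f x t r)), ← e3, ← intervalIntegral.integral_sub]
    · exact intervalIntegral.integral_congr fun r _ => e2 r
    all_goals exact Continuous.intervalIntegrable (by fun_prop) _ _
  rw [e4, sub_self]

theorem kinInt (H b : ℝ → ℝ → ℝ → ℝ) (f : ℝ → ℝ → ℝ → ℝ → ℝ) (Pm Pp : ℝ)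
    (hH : ContDiff ℝ 2 (fun p : ℝ × ℝ × ℝ => H p.1 p.2.1 p.2.2))
    (hb : ContDiff ℝ 1 (fun p : ℝ × ℝ × ℝ => b p.1 p.2.1 p.2.2))
    (hf : ContDiff ℝ 1 (fun p : ℝ × ℝ × ℝ × ℝ => f p.1 p.2.1 p.2.2.1 p.2.2.2))
    (hs : ∀ x t rm rp, f x t rm rp ≠ 0 → Pm ≤ rm ∧ rm < rp ∧ rp < Pp)
    (hk : SolvesKineticF H b f) (x t ρ : ℝ) :
    deriv (fun s => lamF f x s ρ) t - deriv (fun z => AF H f z t ρ) x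
      - b x t ρ * deriv (fun r => AF H f x t r) ρ
      + betaF H b x t ρ * deriv (fun r => lamF f x t r) ρ = 0 := by
  have hV := vel_C1 H hH
  have hbeta := betaF_C1 H b hH hb
  have hVf := hV.mul hf
  have c1 : ContDiff ℝ 1 (fun q : ℝ × ℝ => f x q.1 ρ q.2) :=
    hf.comp (by fun_prop : ContDiff ℝ 1 fun q : ℝ × ℝ => (x, q.1, ρ, q.2))
  have c2 : ContDiff ℝ 1 (fun q : ℝ × ℝ => vel H q.1 t ρ q.2 * f q.1 t ρ q.2) :=
    hVf.comp (by fun_prop : ContDiff ℝ 1 fun q : ℝ × ℝ => (q.1, t, ρ, q.2))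
  have c3 : ContDiff ℝ 1 (fun q : ℝ × ℝ => vel H x t q.1 q.2 * f x t q.1 q.2) :=
    hVf.comp (by fun_prop : ContDiff ℝ 1 fun q : ℝ × ℝ => (x, t, q.1, q.2))
  have c4 : ContDiff ℝ 1 (fun q : ℝ × ℝ => f x t q.1 q.2) :=
    hf.comp (by fun_prop : ContDiff ℝ 1 fun q : ℝ × ℝ => (x, t, q.1, q.2))
  have c5 : ContDiff ℝ 1 (fun r : ℝ => KF H b x t r ρ * f x t ρ r) :=
    (((hb.comp (by fun_prop : ContDiff ℝ 1 fun r : ℝ => (x, t, r))).mul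
      (hV.comp (by fun_prop : ContDiff ℝ 1 fun r : ℝ => (x, t, ρ, r)))).sub
      (hbeta.comp (by fun_prop : ContDiff ℝ 1 fun r : ℝ => (x, t, r)))).mul
      (hf.comp (by fun_prop : ContDiff ℝ 1 fun r : ℝ => (x, t, ρ, r)))
  have d1 : deriv (fun s => lamF f x s ρ) t = ∫ r in Pm..Pp, deriv (fun s => f x s ρ r) t := by
    simp_rw [lamF_eq f Pm Pp hs]
    exact (param1 (fun s r => f x s ρ r) c1 Pm Pp t).deriv
  have d2 : deriv (fun z => AF H f z t ρ) x
      = ∫ r in Pm..Pp, deriv (fun z => vel H z t ρ r * f z t ρ r) x := by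
    simp_rw [AF_eq H f Pm Pp hs]
    exact (param1 (fun z r => vel H z t ρ r * f z t ρ r) c2 Pm Pp x).deriv
  have d3 : deriv (fun a => AF H f x t a) ρ
      = ∫ r in Pm..Pp, deriv (fun a => vel H x t a r * f x t a r) ρ := by
    simp_rw [AF_eq H f Pm Pp hs]
    exact (param1 (fun a r => vel H x t a r * f x t a r) c3 Pm Pp ρ).deriv
  have d4 : deriv (fun a => lamF f x t a) ρ
      = ∫ r in Pm..Pp, deriv (fun a => f x t a r) ρ := by
    simp_rw [lamF_eq f Pm Pp hs]
    exact (param1 (fun a r => f x t a r) c4 Pm Pp ρ).deriv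
  have d5 : ∫ r in Pm..Pp, CplusF H b f x t ρ r = 0 := by
    unfold CplusF
    rw [intervalIntegral.integral_deriv_of_contDiffOn_uIcc c5.contDiffOn]
    have z1 : f x t ρ Pp = 0 := by
      by_contra h0; exact lt_irrefl _ (hs _ _ _ _ h0).2.2
    have z2 : f x t ρ Pm = 0 := by
      by_contra h0; have := hs _ _ _ _ h0; linarith [this.1, this.2.1]
    rw [z1, z2]; ring
  have k1 : Continuous fun r => deriv (fun s => f x s ρ r) t :=
    (deriv_param_cont (fun s r => f x s ρ r) c1).comp (by fun_prop : Continuous fun r : ℝ => (t, r))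
  have k2 : Continuous fun r => deriv (fun z => vel H z t ρ r * f z t ρ r) x :=
    (deriv_param_cont (fun z r => vel H z t ρ r * f z t ρ r) c2).comp
      (by fun_prop : Continuous fun r : ℝ => (x, r))
  have k3 : Continuous fun r => deriv (fun a => vel H x t a r * f x t a r) ρ :=
    (deriv_param_cont (fun a r => vel H x t a r * f x t a r) c3).comp
      (by fun_prop : Continuous fun r : ℝ => (ρ, r))
  have k4 : Continuous fun r => deriv (fun a => f x t a r) ρ :=
    (deriv_param_cont (fun a r => f x t a r) c4).comp (by fun_prop : Continuous fun r : ℝ => (ρ, r))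
  have k5 : Continuous fun r => CplusF H b f x t ρ r := c5.continuous_deriv le_rfl
  have k6 : Continuous fun r => CminusF H b f x t ρ r := by unfold CminusF; fun_prop
  have d6 : ∫ r in Pm..Pp, CminusF H b f x t ρ r = b x t ρ * deriv (fun r => AF H f x t r) ρ
      - betaF H b x t ρ * deriv (fun r => lamF f x t r) ρ := by
    unfold CminusF
    rw [intervalIntegral.integral_sub, intervalIntegral.integral_const_mul,
      intervalIntegral.integral_const_mul, d3, d4]
    all_goals exact Continuous.intervalIntegrable (by fun_prop) _ _
  have hI := QJ_balance H f Pm Pp hV hf hs x t ρ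
  have hcongr : ∀ r, QplusF H f x t ρ r - f x t ρ r * JF H f x t ρ r = _ :=
    fun r => (hk x t ρ r).symm
  simp_rw [hcongr] at hI
  rw [intervalIntegral.integral_sub, intervalIntegral.integral_sub,
    intervalIntegral.integral_sub, ← d1, ← d2, d5, d6] at hI
  · linarith
  all_goals exact Continuous.intervalIntegrable (by fun_prop) _ _

/-- The key transport identity along the characteristic flow. -/
theorem flow_transport
    (H b : ℝ → ℝ → ℝ → ℝ) (φ : ℝ → ℝ → ℝ → ℝ → ℝ)
    (hH : ContDiff ℝ 2 (fun p : ℝ × ℝ × ℝ => H p.1 p.2.1 p.2.2))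
    (hb : ContDiff ℝ 1 (fun p : ℝ × ℝ × ℝ => b p.1 p.2.1 p.2.2))
    (hb_PDE : ∀ x t ρ : ℝ,
      deriv (fun s => b x s ρ) t
          + deriv (fun a => H a t ρ) x * deriv (fun r => b x t r) ρ
          - deriv (fun r => H x t r) ρ * deriv (fun z => b z t ρ) x
        = deriv (fun r => deriv (fun r' => H x t r') r) ρ * (b x t ρ) ^ 2
          + 2 * deriv (fun a => deriv (fun r => H a t r) ρ) x * b x t ρ
          + deriv (fun a => deriv (fun a' => H a' t ρ) a) x)
    (hφ_init : ∀ x ρ t, φ x x ρ t = ρ)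
    (hφ_ode : ∀ x z ρ t, HasDerivAt (fun w => φ x w ρ t) (b z t (φ x z ρ t)) z)
    (hφ_C1 : ContDiff ℝ 1 (fun p : ℝ × ℝ × ℝ × ℝ => φ p.1 p.2.1 p.2.2.1 p.2.2.2))
    (x t ρ z : ℝ) :
    HasDerivAt (fun e => φ x z (ρ + e * betaF H b x t ρ) (t + e))
      (betaF H b z t (φ x z ρ t)) 0 := by
  obtain ⟨hx1, hr1, hsym⟩ := H_x_C1 H hH
  have hbeta := betaF_C1 H b hH hb
  set B := betaF H b x t ρ with hB
  set ψ : ℝ → ℝ → ℝ := fun e z => φ x z (ρ + e * B) (t + e) with hψ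
  have ψC : ContDiff ℝ 1 (fun q : ℝ × ℝ => ψ q.1 q.2) :=
    hφ_C1.comp (by fun_prop : ContDiff ℝ 1 fun q : ℝ × ℝ => (x, q.2, ρ + q.1 * B, t + q.1))
  have ψ0 : ∀ z, ψ 0 z = φ x z ρ t := by intro z; simp [hψ]
  set g : ℝ → ℝ := fun z => deriv (fun e => ψ e z) 0 with hg
  have gd : ∀ z, HasDerivAt (fun e => ψ e z) (g z) 0 := by
    intro z
    have : ContDiff ℝ 1 (fun e => ψ e z) :=
      ψC.comp (by fun_prop : ContDiff ℝ 1 fun e : ℝ => (e, z))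
    exact (this.differentiable one_ne_zero 0).hasDerivAt
  have gc : Continuous g :=
    (deriv_param_cont ψ ψC).comp (by fun_prop : Continuous fun z : ℝ => ((0:ℝ), z))
  have bC : ContDiff ℝ 1 (fun q : ℝ × ℝ => b q.2 (t + q.1) (ψ q.1 q.2)) :=
    hb.comp (contDiff_snd.prodMk ((contDiff_const.add contDiff_fst).prodMk ψC))
  have ψint : ∀ e z, ψ e z = ρ + e * B + ∫ w in x..z, b w (t + e) (ψ e w) := by
    intro e z
    have hc : Continuous fun w => b w (t + e) (ψ e w) :=
      bC.continuous.comp (by fun_prop : Continuous fun w : ℝ => (e, w))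
    have := intervalIntegral.integral_eq_sub_of_hasDerivAt (a := x) (b := z)
      (fun w _ => hφ_ode x w (ρ + e * B) (t + e)) (hc.intervalIntegrable _ _)
    rw [this, hφ_init]
    simp [hψ]
  -- derivative of the integrand in the parameter
  have bt : ∀ w, deriv (fun e => b w (t + e) (ψ e w)) 0
      = deriv (fun s => b w s (φ x w ρ t)) t + deriv (fun r => b w t r) (φ x w ρ t) * g w := by
    intro w
    have h := (chain3 b hb (hasDerivAt_const (0:ℝ) w) ((hasDerivAt_id (0:ℝ)).const_add t)
      (gd w)).deriv
    simp only [id, add_zero, ψ0, mul_zero, zero_add, mul_one] at h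
    exact h
  have btc : Continuous fun w => deriv (fun e => b w (t + e) (ψ e w)) 0 :=
    (deriv_param_cont (fun e w => b w (t + e) (ψ e w)) bC).comp
      (by fun_prop : Continuous fun z : ℝ => ((0:ℝ), z))
  have gint : ∀ z, g z = B + ∫ w in x..z, deriv (fun e => b w (t + e) (ψ e w)) 0 := by
    intro z
    have h1 := param1 (fun e w => b w (t + e) (ψ e w)) bC x z 0
    have h2 : HasDerivAt (fun e : ℝ => ρ + e * B) B 0 := by
      simpa using ((hasDerivAt_id (0:ℝ)).mul_const B).const_add ρ
    have h3 := (h2.add h1).deriv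
    rw [← h3]
    exact congrArg (fun F : ℝ → ℝ => deriv F 0) (funext fun e => ψint e z)
  have gz : ∀ z, HasDerivAt g (deriv (fun s => b z s (φ x z ρ t)) t
      + deriv (fun r => b z t r) (φ x z ρ t) * g z) z := by
    intro z
    rw [← bt z]
    have h1 := (intervalIntegral.integral_hasDerivAt_right (btc.intervalIntegrable x z)
      (btc.stronglyMeasurableAtFilter _ _) btc.continuousAt).const_add B
    have : g = fun z => B + ∫ w in x..z, deriv (fun e => b w (t + e) (ψ e w)) 0 := funext gint
    rw [this]
    exact h1
  -- the other side
  have hz : ∀ z, HasDerivAt (fun z => betaF H b z t (φ x z ρ t))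
      (deriv (fun s => b z s (φ x z ρ t)) t
        + deriv (fun r => b z t r) (φ x z ρ t) * betaF H b z t (φ x z ρ t)) z := by
    intro z
    have hA := chain3 (fun x t ρ => deriv (fun a => H a t ρ) x) hx1 (hasDerivAt_id z)
      (hasDerivAt_const z t) (hφ_ode x z ρ t)
    have hR := chain3 (fun x t ρ => deriv (fun r => H x t r) ρ) hr1 (hasDerivAt_id z)
      (hasDerivAt_const z t) (hφ_ode x z ρ t)
    have hBb := chain3 b hb (hasDerivAt_id z) (hasDerivAt_const z t) (hφ_ode x z ρ t)
    have := hA.add (hBb.mul hR)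
    refine this.congr_deriv ?_
    have hp := hb_PDE z t (φ x z ρ t)
    have hsy := hsym z t (φ x z ρ t)
    simp only [id, mul_zero, add_zero, mul_one, betaF]
    rw [hsy]
    linear_combination (-1) * hp
  have cc : Continuous fun z => deriv (fun r => b z t r) (φ x z ρ t) := by
    have h1 : ContDiff ℝ 1 (fun q : ℝ × ℝ => b q.2 t (φ x q.2 ρ t + q.1)) :=
      hb.comp (contDiff_snd.prodMk (contDiff_const.prodMk (ContDiff.add
        (hφ_C1.comp (by fun_prop : ContDiff ℝ 1 fun q : ℝ × ℝ => (x, q.2, ρ, t))) contDiff_fst)))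
    have h2 := (deriv_param_cont (fun e z => b z t (φ x z ρ t + e)) h1).comp
      (by fun_prop : Continuous fun z : ℝ => ((0:ℝ), z))
    refine h2.congr fun z => ?_
    have := deriv_comp_const_add (fun r => b z t r) (φ x z ρ t) 0
    simpa using this
  have hu := lin_unique (fun z => g z - betaF H b z t (φ x z ρ t))
    (fun z => deriv (fun r => b z t r) (φ x z ρ t)) cc x
    (by
      have := gint x
      simp only [intervalIntegral.integral_same, add_zero] at this
      simp only [this, hφ_init, hB, sub_self])
    (fun z => ((gz z).sub (hz z)).congr_deriv (by ring))
  have := gd z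
  rwa [sub_eq_zero.1 (hu z)] at this

/-- Lemma (2.10): `Γ_t + β Γ_ρ = A(y,t,φ_x^y(ρ;t)) − A(x,t,ρ)`. -/
theorem stmt7
    (H b : ℝ → ℝ → ℝ → ℝ) (f φ : ℝ → ℝ → ℝ → ℝ → ℝ) (Pm Pp : ℝ)
    (hH : ContDiff ℝ 2 (fun p : ℝ × ℝ × ℝ => H p.1 p.2.1 p.2.2))
    (hb : ContDiff ℝ 1 (fun p : ℝ × ℝ × ℝ => b p.1 p.2.1 p.2.2))
    (hb_bdd : ∃ M : ℝ, ∀ x t ρ, |b x t ρ| ≤ M)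
    (hb_PDE : ∀ x t ρ : ℝ,
      deriv (fun s => b x s ρ) t
          + deriv (fun a => H a t ρ) x * deriv (fun r => b x t r) ρ
          - deriv (fun r => H x t r) ρ * deriv (fun z => b z t ρ) x
        = deriv (fun r => deriv (fun r' => H x t r') r) ρ * (b x t ρ) ^ 2
          + 2 * deriv (fun a => deriv (fun r => H a t r) ρ) x * b x t ρ
          + deriv (fun a => deriv (fun a' => H a' t ρ) a) x)
    (hf_C1 : ContDiff ℝ 1 (fun p : ℝ × ℝ × ℝ × ℝ => f p.1 p.2.1 p.2.2.1 p.2.2.2))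
    (hf_nonneg : ∀ x t rm rp, 0 ≤ f x t rm rp)
    (hf_supp : ∀ x t rm rp, ¬ (Pm ≤ rm ∧ rm ≤ rp ∧ rp ≤ Pp) → f x t rm rp = 0)
    (hf_kin : SolvesKineticF H b f)
    (hφ_init : ∀ x ρ t, φ x x ρ t = ρ)
    (hφ_ode : ∀ x z ρ t, HasDerivAt (fun w => φ x w ρ t) (b z t (φ x z ρ t)) z)
    (hφ_C1 : ContDiff ℝ 1 (fun p : ℝ × ℝ × ℝ × ℝ => φ p.1 p.2.1 p.2.2.1 p.2.2.2)) :
    ∀ x y t ρ : ℝ, x ≤ y →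
      deriv (fun s => GammaK f φ x y s ρ) t
          + betaF H b x t ρ * deriv (fun r => GammaK f φ x y t r) ρ
        = AF H f y t (φ x y ρ t) - AF H f x t ρ := by
  intro x y t ρ _
  have hs := supp_strict f Pm Pp hf_C1 hf_supp
  have hV := vel_C1 H hH
  have hL := lamF_C1 f Pm Pp hf_C1 hs
  have hA := AF_C1 H f Pm Pp hV hf_C1 hs
  set B := betaF H b x t ρ with hB
  have htr := flow_transport H b φ hH hb hb_PDE hφ_init hφ_ode hφ_C1 x t ρ
  rw [← hB] at htr
  -- joint differentiability of `Γ` in `(t, ρ)`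
  have hG : ContDiff ℝ 1 (fun p : ℝ × ℝ × ℝ => GammaK f φ x y p.2.1 p.2.2) := by
    unfold GammaK
    exact paramInt_contDiff (E := ℝ × ℝ × ℝ)
      (fun q => lamF f q.2 q.1.2.1 (φ x q.2 q.1.2.2 q.1.2.1))
      (hL.comp ((by fun_prop : ContDiff ℝ 1 fun q : (ℝ × ℝ × ℝ) × ℝ => q.2).prodMk
        ((by fun_prop : ContDiff ℝ 1 fun q : (ℝ × ℝ × ℝ) × ℝ => q.1.2.1).prodMk
        (hφ_C1.comp (by fun_prop : ContDiff ℝ 1 fun q : (ℝ × ℝ × ℝ) × ℝ =>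
          (x, q.2, q.1.2.2, q.1.2.1)))))) x y
  have hcurve := chain3 (fun _ s r => GammaK f φ x y s r) hG (hasDerivAt_const (0:ℝ) (0:ℝ))
    ((hasDerivAt_id (0:ℝ)).const_add t) (((hasDerivAt_id (0:ℝ)).mul_const B).const_add ρ)
  simp only [id, add_zero, zero_mul, mul_zero, zero_add, mul_one, one_mul] at hcurve
  have hpar := param1 (fun e z => lamF f z (t + e) (φ x z (ρ + e * B) (t + e)))
    (hL.comp (contDiff_snd.prodMk ((contDiff_const.add contDiff_fst).prodMk
      (hφ_C1.comp (by fun_prop : ContDiff ℝ 1 fun q : ℝ × ℝ =>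
        (x, q.2, ρ + q.1 * B, t + q.1)))))) x y 0
  have hEq := hcurve.unique hpar
  rw [mul_comm B, hEq]
  have hAd : ∀ z, HasDerivAt (fun z => AF H f z t (φ x z ρ t))
      (deriv (fun e => lamF f z (t + e) (φ x z (ρ + e * B) (t + e))) 0) z := by
    intro z
    have h1 := (chain3 (lamF f) hL (hasDerivAt_const (0:ℝ) z)
      ((hasDerivAt_id (0:ℝ)).const_add t) (htr z)).deriv
    have h2 := chain3 (AF H f) hA (hasDerivAt_id z) (hasDerivAt_const z t) (hφ_ode x z ρ t)
    refine h2.congr_deriv ?_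
    have hk := kinInt H b f Pm Pp hH hb hf_C1 hs hf_kin z t (φ x z ρ t)
    simp only [id, add_zero, zero_mul, mul_zero, zero_add, mul_one] at h1 ⊢
    rw [h1]
    linear_combination (-1) * hk
  have hcont : Continuous fun z =>
      deriv (fun e => lamF f z (t + e) (φ x z (ρ + e * B) (t + e))) 0 :=
    (deriv_param_cont (fun e z => lamF f z (t + e) (φ x z (ρ + e * B) (t + e)))
      (hL.comp (contDiff_snd.prodMk ((contDiff_const.add contDiff_fst).prodMk
      (hφ_C1.comp (by fun_prop : ContDiff ℝ 1 fun q : ℝ × ℝ =>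
        (x, q.2, ρ + q.1 * B, t + q.1))))))).comp
      (by fun_prop : Continuous fun z : ℝ => ((0:ℝ), z))
  rw [intervalIntegral.integral_eq_sub_of_hasDerivAt (fun z _ => hAd z)
    (hcont.intervalIntegrable _ _), hφ_init]
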